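/- Let F be a local field with uniformizer ϖ and ring of integers O_F, let E/F be an unramified quadratic extension, and assume 2 ∈ O_F^×. In the quasi-split unitary similitude group GU₄(F) defined by the Hermitian matrix J = antidiag(1₂, 1₂), with H = GU₂ ×_μ GU₂ embedded block-wise and K the hyperspecial maximal compact subgroup, the four double cosets H τ_i K for i = 0,1,2,3 are pairwise disjoint, where τ₀ = 1, τ₁ = [[ϖ,0,0,−1],[0,ϖ,1,0],[0,0,1,0],[0,0,0,1]], τ₂ = [[ϖ²,0,0,−1],[0,ϖ²,1,0],[0,0,1,0],[0,0,0,1]], τ₃ = [[ϖ²,ϖ,1,−ϖ],[0,ϖ,1,0],[0,0,1,0],[0,0,−1,ϖ]]. -/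

import Mathlib

noncomputable section GU4Setup

variable {E : Type*} [Field E]

/-- The Hermitian matrix `J = antidiag(1₂, 1₂)`. -/
def Jherm : Matrix (Fin 4) (Fin 4) E :=
  !![0, 0, 1, 0; 0, 0, 0, 1; 1, 0, 0, 0; 0, 1, 0, 0]

/-- The `2×2` Hermitian matrix `J₂ = antidiag(1, 1)`. -/
def Jherm2 : Matrix (Fin 2) (Fin 2) E := !![0, 1; 1, 0]

/-- The embedding of a pair of `2×2` matrices via the planes `(e₁,e₃)` and `(e₂,e₄)`. -/
def embedPairU (A B : Matrix (Fin 2) (Fin 2) E) : Matrix (Fin 4) (Fin 4) E :=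
  !![A 0 0, 0, A 0 1, 0;
     0, B 0 0, 0, B 0 1;
     A 1 0, 0, A 1 1, 0;
     0, B 1 0, 0, B 1 1]

variable (F : Type*) [Field F] [Algebra F E] (γ : E ≃ₐ[F] E)

/-- The quasi-split unitary similitude group `GU₄(F)` (for the quadratic extension `E/F` with
Galois involution `γ`) as a set of matrices over `E`. -/
def GUSet : Set (Matrix (Fin 4) (Fin 4) E) :=
  {g | IsUnit g ∧ ∃ c : F, c ≠ 0 ∧
    (g.transpose.map γ) * Jherm * g = algebraMap F E c • Jherm}

/-- The subgroup `H = GU₂ ×_μ GU₂` of `GU₄(F)`, embedded block-wise. -/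
def HUSet : Set (Matrix (Fin 4) (Fin 4) E) :=
  {m | ∃ A B : Matrix (Fin 2) (Fin 2) E, ∃ c : F, c ≠ 0 ∧
    (A.transpose.map γ) * Jherm2 * A = algebraMap F E c • Jherm2 ∧
    (B.transpose.map γ) * Jherm2 * B = algebraMap F E c • Jherm2 ∧
    m = embedPairU A B}

/-- `K = GU₄(F) ∩ GL₄(O_E)`: integral elements with unit determinant. -/
def KUSet (v : Valuation E (WithZero (Multiplicative ℤ))) :
    Set (Matrix (Fin 4) (Fin 4) E) :=
  {g | g ∈ GUSet F γ ∧ (∀ i j, v (g i j) ≤ 1) ∧ v g.det = 1}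

/-- The elements `τ₀ = 1, τ₁, τ₂, τ₃`. -/
def tauU (π : E) : Fin 4 → Matrix (Fin 4) (Fin 4) E :=
  ![1,
    !![π, 0, 0, -1; 0, π, 1, 0; 0, 0, 1, 0; 0, 0, 0, 1],
    !![π ^ 2, 0, 0, -1; 0, π ^ 2, 1, 0; 0, 0, 1, 0; 0, 0, 0, 1],
    !![π ^ 2, π, 1, -π; 0, π, 1, 0; 0, 0, 1, 0; 0, 0, -1, π]]

end GU4Setup

/-! `H` centralizes the projection `P` onto the plane `(e₁, e₃)`, so the `GL₄(O_E)`-conjugacy class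
of `m⁻¹ P m` depends only on the double coset `H m K`. For `m = τ₀, τ₁, τ₂, τ₃` this matrix has
elementary divisors `(1, 1)`, `(ϖ⁻¹, ϖ⁻¹)`, `(ϖ⁻², ϖ⁻²)`, `(ϖ⁻², 1)`. The largest valuation of
an entry therefore separates all pairs but `τ₂, τ₃`, and `2 × 2` minors separate these two. -/

section Minors

variable {R Γ₀ : Type*} [CommRing R] [LinearOrderedCommMonoidWithZero Γ₀] (v : Valuation R Γ₀)
variable {l m n o : Type*} {k : ℕ}

theorem det_submatrix_mul_eq_sum [Fintype m] (M : Matrix l m R) (N : Matrix m n R)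
    (a : Fin k → l) (b : Fin k → n) :
    ((M * N).submatrix a b).det =
      ∑ f : Fin k → m, (∏ i, M (a i) (f i)) * (N.submatrix f b).det := by
  classical
  have rows : (M * N).submatrix a b = fun i => ∑ j, M (a i) j • fun c => N j (b c) := by
    ext i c
    simp [Matrix.mul_apply]
  rw [rows]
  refine (Matrix.detRowAlternating.toMultilinearMap.map_sum _).trans
    (Finset.sum_congr rfl fun f _ => ?_)
  exact Matrix.detRowAlternating.toMultilinearMap.map_smul_univ _ _

/-- The largest valuation of a `k × k` minor of `M`, that is, the valuation of the `k`-th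
determinantal ideal of `M`. The selections of rows and columns are arbitrary maps: a repeated index
gives a zero minor and a reordering changes only its sign. -/
def maxMinor [Fintype m] [Fintype n] (k : ℕ) (M : Matrix m n R) : Γ₀ :=
  Finset.univ.sup fun s : (Fin k → m) × (Fin k → n) => v (M.submatrix s.1 s.2).det

variable {v} [Fintype l] [Fintype m] [Fintype n] [Fintype o]

theorem maxMinor_le_iff {M : Matrix m n R} {r : Γ₀} :
    maxMinor v k M ≤ r ↔ ∀ (a : Fin k → m) (b : Fin k → n), v (M.submatrix a b).det ≤ r := by
  simp [maxMinor, Finset.sup_le_iff]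

theorem le_maxMinor (M : Matrix m n R) (a : Fin k → m) (b : Fin k → n) :
    v (M.submatrix a b).det ≤ maxMinor v k M :=
  maxMinor_le_iff.1 le_rfl a b

theorem maxMinor_one_le_iff {M : Matrix m n R} {r : Γ₀} :
    maxMinor v 1 M ≤ r ↔ ∀ i j, v (M i j) ≤ r := by
  simp only [maxMinor_le_iff, Matrix.det_fin_one, Matrix.submatrix_apply]
  exact ⟨fun h i j => h (fun _ => i) (fun _ => j), fun h a b => h _ _⟩

theorem valuation_le_maxMinor_one (M : Matrix m n R) (i : m) (j : n) :
    v (M i j) ≤ maxMinor v 1 M :=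
  maxMinor_one_le_iff.1 le_rfl i j

theorem maxMinor_transpose (M : Matrix m n R) : maxMinor v k M.transpose = maxMinor v k M := by
  refine eq_of_forall_ge_iff fun r => ?_
  simp only [maxMinor_le_iff, ← Matrix.transpose_submatrix, Matrix.det_transpose]
  exact forall_comm

theorem maxMinor_mul_le_right {M : Matrix l m R} (hM : ∀ i j, v (M i j) ≤ 1) (N : Matrix m n R) :
    maxMinor v k (M * N) ≤ maxMinor v k N := by
  refine maxMinor_le_iff.2 fun a b => ?_
  rw [det_submatrix_mul_eq_sum]
  refine v.map_sum_le fun f _ => ?_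
  rw [map_mul, map_prod]
  exact mul_le_of_le_one_of_le (Finset.prod_le_one' fun i _ => hM _ _) (le_maxMinor N f b)

theorem maxMinor_mul_le_left (M : Matrix l m R) {N : Matrix m n R} (hN : ∀ i j, v (N i j) ≤ 1) :
    maxMinor v k (M * N) ≤ maxMinor v k M := by
  rw [← maxMinor_transpose, Matrix.transpose_mul, ← maxMinor_transpose M]
  exact maxMinor_mul_le_right (fun i j => hN j i) _

theorem maxMinor_mul_mul_le {L : Matrix l m R} (hL : ∀ i j, v (L i j) ≤ 1) (M : Matrix m n R)
    {N : Matrix n o R} (hN : ∀ i j, v (N i j) ≤ 1) :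
    maxMinor v k (L * M * N) ≤ maxMinor v k M :=
  (maxMinor_mul_le_left _ hN).trans (maxMinor_mul_le_right hL M)

theorem valuation_det_le_one [DecidableEq n] {M : Matrix n n R} (hM : ∀ i j, v (M i j) ≤ 1) :
    v M.det ≤ 1 := by
  rw [Matrix.det_apply]
  refine v.map_sum_le fun σ _ => ?_
  have hprod : v (∏ i, M (σ i) i) ≤ 1 := by
    rw [map_prod]
    exact Finset.prod_le_one' fun i _ => hM _ _
  rcases Int.units_eq_one_or σ.sign with hσ | hσ <;> simpa [hσ] using hprod

theorem maxMinor_mul_mul_le_valuation_det {L : Matrix m (Fin k) R} (hL : ∀ i j, v (L i j) ≤ 1)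
    (M : Matrix (Fin k) (Fin k) R) {N : Matrix (Fin k) n R} (hN : ∀ i j, v (N i j) ≤ 1) :
    maxMinor v k (L * M * N) ≤ v M.det := by
  refine maxMinor_le_iff.2 fun a b => ?_
  have hsub : (L * M * N).submatrix a b = L.submatrix a id * M * N.submatrix id b := rfl
  rw [hsub, Matrix.det_mul, Matrix.det_mul, map_mul, map_mul]
  exact mul_le_of_le_of_le_one
    (mul_le_of_le_one_of_le (valuation_det_le_one fun _ _ => hL _ _) le_rfl)
    (valuation_det_le_one fun _ _ => hN _ _)

end Minors

section Integral

variable {K Γ₀ : Type*} [Field K] [LinearOrderedCommGroupWithZero Γ₀] {v : Valuation K Γ₀}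
variable {n : Type*} [Fintype n] [DecidableEq n] {k : ℕ}

theorem valuation_inv_apply_le_one {M : Matrix n n K} (hM : ∀ i j, v (M i j) ≤ 1)
    (hdet : v M.det = 1) (i j : n) : v (M⁻¹ i j) ≤ 1 := by
  let M₀ : Matrix n n v.integer := fun i j => ⟨M i j, hM i j⟩
  have hadj : M.adjugate i j = M₀.adjugate i j :=
    congrFun₂ (v.integer.subtype.map_adjugate M₀).symm i j
  rw [Matrix.inv_def, Matrix.smul_apply, smul_eq_mul, map_mul, Ring.inverse_eq_inv', map_inv₀,
    hdet, inv_one, one_mul, hadj]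
  exact (M₀.adjugate i j).2

theorem maxMinor_conj {M : Matrix n n K} (hM : ∀ i j, v (M i j) ≤ 1) (hdet : v M.det = 1)
    (X : Matrix n n K) : maxMinor v k (M⁻¹ * X * M) = maxMinor v k X := by
  have hunit : IsUnit M.det := (v.ne_zero_iff.1 (hdet ▸ one_ne_zero)).isUnit
  have hinv := valuation_inv_apply_le_one hM hdet
  refine le_antisymm (maxMinor_mul_mul_le hinv X hM) ?_
  calc maxMinor v k X = maxMinor v k (M * (M⁻¹ * X * M) * M⁻¹) := by
        rw [← Matrix.mul_assoc, ← Matrix.mul_assoc, Matrix.mul_nonsing_inv _ hunit, Matrix.one_mul,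
          Matrix.mul_nonsing_inv_cancel_right _ _ hunit]
    _ ≤ maxMinor v k (M⁻¹ * X * M) := maxMinor_mul_mul_le hM _ hinv

end Integral

section PlaneProjection

variable {E : Type*} [Field E]

/-- The projection onto the plane `(e₁, e₃)` along `(e₂, e₄)`, whose centralizer contains `H`. -/
def planeProj : Matrix (Fin 4) (Fin 4) E := embedPairU 1 0

/-- The conjugate `g⁻¹ P g` of the plane projection `P`; up to conjugation by `K` it is an invariant
of the double coset `H g K`. -/
noncomputable def conjPlaneProj (g : Matrix (Fin 4) (Fin 4) E) : Matrix (Fin 4) (Fin 4) E :=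
  g⁻¹ * planeProj * g

theorem embedPairU_mul (A B A' B' : Matrix (Fin 2) (Fin 2) E) :
    embedPairU A B * embedPairU A' B' = embedPairU (A * A') (B * B') := by
  ext i j
  fin_cases i <;> fin_cases j <;>
    simp [embedPairU, Matrix.mul_apply, Fin.sum_univ_four, Fin.sum_univ_two]

theorem embedPairU_one : embedPairU (1 : Matrix (Fin 2) (Fin 2) E) 1 = 1 := by
  ext i j
  fin_cases i <;> fin_cases j <;> simp [embedPairU]

theorem isUnit_embedPairU {A B : Matrix (Fin 2) (Fin 2) E} (hA : IsUnit A) (hB : IsUnit B) :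
    IsUnit (embedPairU A B) := by
  obtain ⟨A', hA'⟩ := hA.exists_right_inv
  obtain ⟨B', hB'⟩ := hB.exists_right_inv
  exact .of_mul_eq_one (embedPairU A' B') (by rw [embedPairU_mul, hA', hB', embedPairU_one])

theorem isUnit_of_mul_Jherm2_mul_eq_smul {M A : Matrix (Fin 2) (Fin 2) E} {a : E} (ha : a ≠ 0)
    (h : M * Jherm2 * A = a • Jherm2) : IsUnit A := by
  have hJ : IsUnit (a • Jherm2 : Matrix (Fin 2) (Fin 2) E) := by
    simp [Matrix.isUnit_iff_isUnit_det, Jherm2, Matrix.det_fin_two, ha]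
  exact isUnit_of_mul_isUnit_right (h ▸ hJ)

variable {F : Type*} [Field F] [Algebra F E] {γ : E ≃ₐ[F] E}

theorem isUnit_of_mem_HUSet {h : Matrix (Fin 4) (Fin 4) E} (hh : h ∈ HUSet F γ) : IsUnit h := by
  obtain ⟨A, B, c, hc, hA, hB, rfl⟩ := hh
  have hc' : algebraMap F E c ≠ 0 := (map_ne_zero _).2 hc
  exact isUnit_embedPairU (isUnit_of_mul_Jherm2_mul_eq_smul hc' hA)
    (isUnit_of_mul_Jherm2_mul_eq_smul hc' hB)

theorem commute_planeProj_of_mem_HUSet {h : Matrix (Fin 4) (Fin 4) E} (hh : h ∈ HUSet F γ) :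
    Commute planeProj h := by
  obtain ⟨A, B, c, -, -, -, rfl⟩ := hh
  simp [Commute, SemiconjBy, planeProj, embedPairU_mul]

theorem conjPlaneProj_mul_of_mem_HUSet {h : Matrix (Fin 4) (Fin 4) E} (hh : h ∈ HUSet F γ)
    (g : Matrix (Fin 4) (Fin 4) E) : conjPlaneProj (h * g) = conjPlaneProj g := by
  have hdet : IsUnit h.det := (Matrix.isUnit_iff_isUnit_det h).1 (isUnit_of_mem_HUSet hh)
  calc (h * g)⁻¹ * planeProj * (h * g) = g⁻¹ * (h⁻¹ * (planeProj * h)) * g := by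
        simp only [Matrix.mul_inv_rev, Matrix.mul_assoc]
    _ = g⁻¹ * planeProj * g := by
        rw [(commute_planeProj_of_mem_HUSet hh).eq, Matrix.nonsing_inv_mul_cancel_left _ _ hdet]

theorem maxMinor_conjPlaneProj_mul_mul {v : Valuation E (WithZero (Multiplicative ℤ))}
    {h k : Matrix (Fin 4) (Fin 4) E} (hh : h ∈ HUSet F γ) (hk : k ∈ KUSet F γ v)
    (g : Matrix (Fin 4) (Fin 4) E) (r : ℕ) :
    maxMinor v r (conjPlaneProj (h * g * k)) = maxMinor v r (conjPlaneProj g) := by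
  have hconj : conjPlaneProj (h * g * k) = k⁻¹ * conjPlaneProj g * k := by
    rw [Matrix.mul_assoc, conjPlaneProj_mul_of_mem_HUSet hh]
    simp only [conjPlaneProj, Matrix.mul_inv_rev, Matrix.mul_assoc]
  rw [hconj, maxMinor_conj hk.2.1 hk.2.2]

end PlaneProjection

section Representatives

variable {E : Type*} [Field E] {π : E}

theorem conjPlaneProj_eq_of_mul_eq {g X : Matrix (Fin 4) (Fin 4) E} (hg : g.det ≠ 0)
    (h : planeProj * g = g * X) : conjPlaneProj g = X := by
  rw [conjPlaneProj, Matrix.mul_assoc, h, Matrix.nonsing_inv_mul_cancel_left _ _ hg.isUnit]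

theorem det_tauU_ne_zero (hπ : π ≠ 0) (i : Fin 4) : (tauU π i).det ≠ 0 := by
  fin_cases i <;>
    simp [tauU, Matrix.det_succ_row_zero, Fin.sum_univ_succ, Fin.succAbove, hπ]

/-- The common shape of the conjugates `τᵢ⁻¹ P τᵢ` of the plane projection `P` for `i = 0, 1, 2`,
with `t = 0, ϖ⁻¹, ϖ⁻²` respectively. -/
def shearProj (t : E) : Matrix (Fin 4) (Fin 4) E :=
  !![1, 0, 0, -t; 0, 0, -t, 0; 0, 0, 1, 0; 0, 0, 0, 0]

theorem conjPlaneProj_tauU_zero : conjPlaneProj (tauU π 0) = shearProj 0 := by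
  simp only [conjPlaneProj, tauU, Matrix.cons_val_zero, inv_one, one_mul, mul_one]
  ext i j
  fin_cases i <;> fin_cases j <;> simp [planeProj, embedPairU, shearProj]

theorem conjPlaneProj_tauU_one (hπ : π ≠ 0) : conjPlaneProj (tauU π 1) = shearProj π⁻¹ := by
  refine conjPlaneProj_eq_of_mul_eq (det_tauU_ne_zero hπ 1) ?_
  ext i j
  fin_cases i <;> fin_cases j <;>
    simp [tauU, planeProj, embedPairU, shearProj, Matrix.mul_apply, Fin.sum_univ_four, hπ]

theorem conjPlaneProj_tauU_two (hπ : π ≠ 0) : conjPlaneProj (tauU π 2) = shearProj (π⁻¹ ^ 2) := by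
  refine conjPlaneProj_eq_of_mul_eq (det_tauU_ne_zero hπ 2) ?_
  ext i j
  fin_cases i <;> fin_cases j <;>
    simp [tauU, planeProj, embedPairU, shearProj, Matrix.mul_apply, Fin.sum_univ_four, hπ]

-- The outer factors are integral, so the middle one controls the minors.
theorem conjPlaneProj_tauU_three (hπ : π ≠ 0) : conjPlaneProj (tauU π 3) =
    !![1, 0; 0, -1; 0, π; 0, 1] * !![π⁻¹, 2 * π⁻¹ ^ 2; 0, π⁻¹] * !![π, 1, 0, -1; 0, 0, 1, 0] := by
  refine conjPlaneProj_eq_of_mul_eq (det_tauU_ne_zero hπ 3) ?_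
  ext i j
  fin_cases i <;> fin_cases j <;>
    simp [tauU, planeProj, embedPairU, Matrix.mul_apply, Fin.sum_univ_four]
  all_goals field_simp
  all_goals ring

variable {Γ₀ : Type*} [LinearOrderedCommGroupWithZero Γ₀] {v : Valuation E Γ₀}

theorem maxMinor_one_shearProj (t : E) : maxMinor v 1 (shearProj t) = max 1 (v t) := by
  refine le_antisymm (maxMinor_one_le_iff.2 fun i j => ?_) (max_le ?_ ?_)
  · fin_cases i <;> fin_cases j <;> simp [shearProj]
  · simpa [shearProj] using valuation_le_maxMinor_one (v := v) (shearProj t) 0 0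
  · simpa [shearProj] using valuation_le_maxMinor_one (v := v) (shearProj t) 0 3

theorem sq_le_maxMinor_two_shearProj (t : E) : v t ^ 2 ≤ maxMinor v 2 (shearProj t) := by
  have hminor : ((shearProj t).submatrix ![0, 1] ![2, 3]).det = -t ^ 2 := by
    rw [Matrix.det_fin_two]
    simp [shearProj, sq]
  rw [← map_pow, ← v.map_neg, ← hminor]
  exact le_maxMinor _ _ _

theorem maxMinor_conjPlaneProj_tauU_three (hπ : π ≠ 0) (hv : v π ≤ 1) (h2 : v 2 = 1) :
    maxMinor v 1 (conjPlaneProj (tauU π 3)) = v π⁻¹ ^ 2 ∧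
      maxMinor v 2 (conjPlaneProj (tauU π 3)) ≤ v π⁻¹ ^ 2 := by
  let L : Matrix (Fin 4) (Fin 2) E := !![1, 0; 0, -1; 0, π; 0, 1]
  let Y : Matrix (Fin 2) (Fin 2) E := !![π⁻¹, 2 * π⁻¹ ^ 2; 0, π⁻¹]
  let N : Matrix (Fin 2) (Fin 4) E := !![π, 1, 0, -1; 0, 0, 1, 0]
  have hL (i j) : v (L i j) ≤ 1 := by fin_cases i <;> fin_cases j <;> simp [L, hv]
  have hN (i j) : v (N i j) ≤ 1 := by fin_cases i <;> fin_cases j <;> simp [N, hv]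
  have hinv : 1 ≤ v π⁻¹ := (v.val_le_one_iff hπ).1 hv
  have hY (i j) : v (Y i j) ≤ v π⁻¹ ^ 2 := by
    have hsq : v π⁻¹ ≤ v π⁻¹ ^ 2 := le_self_pow₀ hinv two_ne_zero
    fin_cases i <;> fin_cases j <;> simp [Y, h2, hsq, -map_inv₀, -inv_pow]
  have hentry : v ((L * Y * N) 0 2) = v π⁻¹ ^ 2 := by
    simp [L, Y, N, Matrix.mul_apply, Fin.sum_univ_two, h2]
  have hdet : v Y.det = v π⁻¹ ^ 2 := by simp [Y, Matrix.det_fin_two, sq]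
  rw [conjPlaneProj_tauU_three hπ]
  exact ⟨le_antisymm ((maxMinor_mul_mul_le hL Y hN).trans (maxMinor_one_le_iff.2 hY))
      (hentry ▸ valuation_le_maxMinor_one _ 0 2),
    hdet ▸ maxMinor_mul_mul_le_valuation_det hL Y hN⟩

theorem maxMinor_one_conjPlaneProj_tauU (hπ : π ≠ 0) (hv : v π ≤ 1) (h2 : v 2 = 1) (i : Fin 4) :
    maxMinor v 1 (conjPlaneProj (tauU π i)) = ![1, v π⁻¹, v π⁻¹ ^ 2, v π⁻¹ ^ 2] i := by
  have hinv : 1 ≤ v π⁻¹ := (v.val_le_one_iff hπ).1 hv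
  match i with
  | 0 => simp [conjPlaneProj_tauU_zero, maxMinor_one_shearProj]
  | 1 => simpa [conjPlaneProj_tauU_one hπ, maxMinor_one_shearProj] using hinv
  | 2 => simpa [conjPlaneProj_tauU_two hπ, maxMinor_one_shearProj] using one_le_pow₀ hinv
  | 3 => exact (maxMinor_conjPlaneProj_tauU_three hπ hv h2).1

theorem maxMinor_two_conjPlaneProj_tauU_three_lt_two (hπ : π ≠ 0) (hv : v π < 1) (h2 : v 2 = 1) :
    maxMinor v 2 (conjPlaneProj (tauU π 3)) < maxMinor v 2 (conjPlaneProj (tauU π 2)) := by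
  have hinv : 1 < v π⁻¹ := (v.val_lt_one_iff hπ).1 hv
  calc maxMinor v 2 (conjPlaneProj (tauU π 3)) ≤ v π⁻¹ ^ 2 :=
        (maxMinor_conjPlaneProj_tauU_three hπ hv.le h2).2
    _ < v (π⁻¹ ^ 2) ^ 2 := by
        rw [map_pow, ← pow_mul]
        exact pow_lt_pow_right₀ hinv (by norm_num)
    _ ≤ maxMinor v 2 (conjPlaneProj (tauU π 2)) :=
        conjPlaneProj_tauU_two hπ ▸ sq_le_maxMinor_two_shearProj _

theorem eq_of_maxMinor_conjPlaneProj_tauU_eq (hπ : π ≠ 0) (hv : v π < 1) (h2 : v 2 = 1)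
    {i j : Fin 4} (h : ∀ r, maxMinor v r (conjPlaneProj (tauU π i)) =
      maxMinor v r (conjPlaneProj (tauU π j))) : i = j := by
  have hinv : 1 < v π⁻¹ := (v.val_lt_one_iff hπ).1 hv
  have hsq : v π⁻¹ < v π⁻¹ ^ 2 := lt_self_pow₀ hinv one_lt_two
  have hone_sq : 1 < v π⁻¹ ^ 2 := hinv.trans hsq
  have hentries := h 1
  have hminors := h 2
  have hlt := maxMinor_two_conjPlaneProj_tauU_three_lt_two hπ hv h2
  simp only [maxMinor_one_conjPlaneProj_tauU hπ hv.le h2] at hentries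
  generalize v π⁻¹ = q at hinv hsq hone_sq hentries
  fin_cases i <;> fin_cases j <;> simp_all [ne_of_gt, ne_of_lt]

end Representatives

theorem gu4_double_cosets_disjoint_general {E : Type*} [Field E] (F : Type*) [Field F] [Algebra F E]
    (γ : E ≃ₐ[F] E) (v : Valuation E (WithZero (Multiplicative ℤ))) {π : E} (hπ : π ≠ 0)
    (hv : v π < 1) (h2 : v (2 : E) = 1) :
    ∀ i j : Fin 4, i ≠ j →
      Disjoint
        {m | ∃ h ∈ HUSet F γ, ∃ k ∈ KUSet F γ v, m = h * tauU π i * k}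
        {m | ∃ h ∈ HUSet F γ, ∃ k ∈ KUSet F γ v, m = h * tauU π j * k} := by
  intro i j hij
  refine Set.disjoint_left.2 ?_
  rintro m ⟨h, hh, k, hk, hi⟩ ⟨h', hh', k', hk', hj⟩
  refine hij (eq_of_maxMinor_conjPlaneProj_tauU_eq hπ hv h2 fun r => ?_)
  rw [← maxMinor_conjPlaneProj_mul_mul hh hk, ← hi, hj, maxMinor_conjPlaneProj_mul_mul hh' hk']

/-- For the unramified quadratic extension `E/F` of local fields with `2 ∈ O_F^×`, the four
double cosets `H τᵢ K`, `i = 0, 1, 2, 3`, in the quasi-split unitary similitude group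
`GU₄(F)` are pairwise disjoint. -/
theorem gu4_double_cosets_disjoint
    {E : Type*} [Field E] (F : Type*) [Field F] [Algebra F E] [IsGalois F E]
    (hdeg : Module.finrank F E = 2)
    (γ : E ≃ₐ[F] E) (hγ : γ ≠ AlgEquiv.refl)
    (v : Valuation E (WithZero (Multiplicative ℤ)))
    (hvγ : ∀ x : E, v (γ x) = v x)
    (ϖ : F)
    (hϖ : v (algebraMap F E ϖ) = ((Multiplicative.ofAdd (-1 : ℤ) : Multiplicative ℤ) :
      WithZero (Multiplicative ℤ)))
    (h2 : v (2 : E) = 1) :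
    ∀ i j : Fin 4, i ≠ j →
      Disjoint
        {m | ∃ h ∈ HUSet F γ, ∃ k ∈ KUSet F γ v,
          m = h * tauU (algebraMap F E ϖ) i * k}
        {m | ∃ h ∈ HUSet F γ, ∃ k ∈ KUSet F γ v,
          m = h * tauU (algebraMap F E ϖ) j * k} := by
  have hϖ_ne : algebraMap F E ϖ ≠ 0 := v.ne_zero_iff.1 (hϖ ▸ WithZero.coe_ne_zero)
  have hϖ_lt : v (algebraMap F E ϖ) < 1 := by
    rw [hϖ, ← WithZero.coe_one, WithZero.coe_lt_coe]
    decide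
  exact gu4_double_cosets_disjoint_general F γ v hϖ_ne hϖ_lt h2
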